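/- Let F ∈ ℝ[x_1,…,x_N] be a multi-affine homogeneous polynomial of degree r ≥ 3 (multi-affine means of degree at most one in each variable), fix an index k ∈ {1,…,N}, and set F_0 = F|_{x_k = 0} and F_k = ∂F/∂x_k, both polynomials in the variables x_i with i ≠ k. Let a ∈ ℝ^N_{≥0} be a point with F_0(a) > 0 and F_k(a) > 0. Then for every real s ≥ (r−1)/r (respectively s > (r−1)/r), the N×N matrix (−F·H_F + s·(∇F)ᵀ(∇F)) evaluated at a is positive semidefinite (respectively positive definite) if and only if the (N−1)×(N−1) matrix, indexed by i, j ≠ k, given by s·x_k·F_0·F_k·(−F_k·H_{F_k} + ((2s−1)/s)·(∇F_k)ᵀ(∇F_k)) + s·F_k²·(−F_0·H_{F_0} + s·(∇F_0)ᵀ(∇F_0)) − (s·F_k·∇F_0 − F_0·∇F_k)ᵀ(s·F_k·∇F_0 − F_0·∇F_k), evaluated at a, is positive semidefinite (respectively positive definite). -/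

import Mathlib

open MvPolynomial

/-!
Since `F` is affine in `x_k`, it splits as `F = F₀ + x_k F_k` with `F₀` and `F_k` independent of
`x_k`. Hence the entry at `(k, k)` of `M = -F·H_F + s·(∇F)ᵀ(∇F)` is `s·F_k²`, which is positive at
`a`, and `M` is positive (semi)definite iff its Schur complement with respect to this entry is.
Substituting the splitting shows that this Schur complement is the reduced matrix multiplied by the
positive number `F / (s·F₀·F_k²)`.
-/

section SchurComplement

open Matrix

lemma submatrix_sumCompl_eq_fromBlocks {n α : Type*} [DecidableEq n] [Zero α] [Star α]
    {M : Matrix n n α} (hM : M.IsHermitian) (k : n) :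
    M.submatrix (Equiv.sumCompl (· = k)) (Equiv.sumCompl (· = k)) =
      fromBlocks (diagonal fun _ => M k k) (M.toBlock (· = k) (· ≠ k))
        (M.toBlock (· = k) (· ≠ k))ᴴ (M.toBlock (· ≠ k) (· ≠ k)) := by
  ext (⟨i, rfl⟩ | i) (⟨j, hj⟩ | j)
  · subst hj
    simp
  · simp
  · simp [hM.apply]
  · simp

lemma posDef_fromBlocks_iff_posDef_schurComplement {m n R : Type*} [Fintype m] [DecidableEq m]
    [Finite n] [CommRing R] [PartialOrder R] [StarRing R] [StarOrderedRing R] {A : Matrix m m R}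
    [Invertible A] (B : Matrix m n R) (D : Matrix n n R) (hA : A.PosDef) :
    (fromBlocks A B Bᴴ D).PosDef ↔ (D - Bᴴ * A⁻¹ * B).PosDef := by
  have := Fintype.ofFinite n
  rw [posDef_iff_dotProduct_mulVec, posDef_iff_dotProduct_mulVec,
    IsHermitian.fromBlocks₁₁ _ _ hA.isHermitian]
  refine and_congr_right fun _ => ⟨fun h y hy => ?_, fun h v hv => ?_⟩
  · have hpos := h (x := Sum.elim (-((A⁻¹ * B) *ᵥ y)) y) fun h0 =>
      hy (funext fun i => congrFun h0 (Sum.inr i))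
    rwa [dotProduct_mulVec, schur_complement_eq₁₁ B D _ _ hA.isHermitian, neg_add_cancel,
      dotProduct_zero, zero_add, ← dotProduct_mulVec] at hpos
  · obtain ⟨x, y, rfl⟩ : ∃ x y, v = Sum.elim x y := ⟨_, _, (Sum.elim_comp_inl_inr v).symm⟩
    rw [dotProduct_mulVec, schur_complement_eq₁₁ B D _ _ hA.isHermitian, ← dotProduct_mulVec,
      ← dotProduct_mulVec]
    obtain rfl | hy := eq_or_ne y 0
    · have hx : x ≠ 0 := by
        rintro rfl
        exact hv Sum.elim_zero_zero
      simpa using hA.dotProduct_mulVec_pos hx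
    · exact add_pos_of_nonneg_of_pos (hA.posSemidef.dotProduct_mulVec_nonneg _) (h hy)

variable {n K : Type*} [Field K] [StarRing K]

/-- The Schur complement of a matrix `M` with respect to its diagonal entry at `k`, meaningful when
that entry is nonzero. Its rows and columns are indexed by the remaining indices. -/
def pivotSchurComplement (M : Matrix n n K) (k : n) : Matrix {i // i ≠ k} {i // i ≠ k} K :=
  of fun i j => M i j - M i k * (M k k)⁻¹ * M k j

lemma toBlock_sub_mul_inv_mul_eq_pivotSchurComplement [DecidableEq n] {M : Matrix n n K}
    (hM : M.IsHermitian) (k : n) :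
    M.toBlock (· ≠ k) (· ≠ k) - (M.toBlock (· = k) (· ≠ k))ᴴ *
        (diagonal fun _ : {i // i = k} => M k k)⁻¹ * M.toBlock (· = k) (· ≠ k) =
      pivotSchurComplement M k := by
  have hinv : (diagonal fun _ : {i // i = k} => M k k)⁻¹ = diagonal fun _ => (M k k)⁻¹ := by
    simp [inv_subsingleton, Ring.inverse_eq_inv]
  ext i j
  have hdefault : ((default : {i // i = k}) : n) = k := rfl
  simp [hinv, pivotSchurComplement, Matrix.mul_apply, hM.apply, hdefault]

variable [PartialOrder K] [StarOrderedRing K]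

lemma posSemidef_iff_posSemidef_pivotSchurComplement [Finite n] {M : Matrix n n K}
    (hM : M.IsHermitian) {k : n} (hk : 0 < M k k) :
    M.PosSemidef ↔ (pivotSchurComplement M k).PosSemidef := by
  classical
  have hA : (diagonal fun _ : {i // i = k} => M k k).PosDef := .diagonal fun _ => hk
  have := hA.isUnit.invertible
  rw [← toBlock_sub_mul_inv_mul_eq_pivotSchurComplement hM, ← hA.fromBlocks₁₁,
    ← submatrix_sumCompl_eq_fromBlocks hM, posSemidef_submatrix_equiv]

lemma posDef_iff_posDef_pivotSchurComplement [Finite n] {M : Matrix n n K}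
    (hM : M.IsHermitian) {k : n} (hk : 0 < M k k) :
    M.PosDef ↔ (pivotSchurComplement M k).PosDef := by
  classical
  have hA : (diagonal fun _ : {i // i = k} => M k k).PosDef := .diagonal fun _ => hk
  have := hA.isUnit.invertible
  rw [← toBlock_sub_mul_inv_mul_eq_pivotSchurComplement hM,
    ← posDef_fromBlocks_iff_posDef_schurComplement _ _ hA, ← submatrix_sumCompl_eq_fromBlocks hM]
  refine ⟨fun h => h.submatrix (Equiv.injective _), fun h => ?_⟩
  simpa using h.submatrix (Equiv.sumCompl (· = k)).symm.injective

end SchurComplement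

section Smul

variable {n α R : Type*} [Field α] [LinearOrder α] [StarRing α] [StarOrderedRing α]
  [Ring R] [PartialOrder R] [StarRing R] [Algebra α R] [StarModule α R]

lemma posSemidef_smul_iff [PosSMulMono α R] {M : Matrix n n R} {c : α} (hc : 0 < c) :
    (c • M).PosSemidef ↔ M.PosSemidef :=
  ⟨fun h => by simpa [hc.ne'] using h.smul (inv_nonneg.2 hc.le), fun h => h.smul hc.le⟩

lemma posDef_smul_iff [PosSMulStrictMono α R] {M : Matrix n n R} {c : α} (hc : 0 < c) :
    (c • M).PosDef ↔ M.PosDef :=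
  ⟨fun h => by simpa [hc.ne'] using h.smul (inv_pos.2 hc), fun h => h.smul hc⟩

end Smul

section AffineInVariable

variable {σ R : Type*} [CommSemiring R]

lemma pderiv_pderiv_comm (i j : σ) (F : MvPolynomial σ R) :
    pderiv i (pderiv j F) = pderiv j (pderiv i F) := by
  obtain rfl | hij := eq_or_ne i j
  · rfl
  · ext m
    simp [coeff_pderiv, hij, hij.symm, add_right_comm m, mul_right_comm]

lemma pderiv_pderiv_self_eq_zero {k : σ} {F : MvPolynomial σ R} (hF : F.degreeOf k ≤ 1) :
    pderiv k (pderiv k F) = 0 := by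
  ext m
  have h : coeff (m + Finsupp.single k 1 + Finsupp.single k 1) F = 0 := by
    by_contra h
    simpa using degreeOf_le_iff.mp hF _ (mem_support_iff.mpr h)
  simp [coeff_pderiv, h]

variable [DecidableEq σ]

/-- Substitution of `0` for the variable `x_k`, sending `F` to `F₀ = F|_{x_k = 0}`. The result is
still regarded as a polynomial in all the variables. -/
noncomputable def substZero (k : σ) : MvPolynomial σ R →ₐ[R] MvPolynomial σ R :=
  aeval fun i => if i = k then 0 else X i

lemma substZero_monomial (k : σ) (m : σ →₀ ℕ) (c : R) :
    substZero k (monomial m c) = if m k = 0 then monomial m c else 0 := by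
  rw [substZero, aeval_monomial]
  split_ifs with h
  · rw [monomial_eq, algebraMap_eq]
    congr 1
    refine Finsupp.prod_congr fun i hi => ?_
    rw [if_neg]
    rintro rfl
    exact Finsupp.mem_support_iff.mp hi h
  · rw [Finsupp.prod, Finset.prod_eq_zero (Finsupp.mem_support_iff.mpr h), mul_zero]
    simp [h]

lemma eq_substZero_add_X_mul_pderiv {k : σ} {F : MvPolynomial σ R} (hF : F.degreeOf k ≤ 1) :
    F = substZero k F + X k * pderiv k F := by
  rw [degreeOf_le_iff] at hF
  conv_lhs => rw [← F.support_sum_monomial_coeff]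
  conv_rhs => rw [← F.support_sum_monomial_coeff]
  rw [map_sum, map_sum, Finset.mul_sum, ← Finset.sum_add_distrib]
  refine Finset.sum_congr rfl fun m hm => ?_
  rw [substZero_monomial, X_mul_pderiv_monomial]
  obtain h | h := Nat.le_one_iff_eq_zero_or_eq_one.mp (hF m hm) <;> simp [h]

lemma pderiv_eq_of_ne {i k : σ} (hik : i ≠ k) {F : MvPolynomial σ R} (hF : F.degreeOf k ≤ 1) :
    pderiv i F = pderiv i (substZero k F) + X k * pderiv i (pderiv k F) := by
  conv_lhs => rw [eq_substZero_add_X_mul_pderiv hF]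
  simp [pderiv_X_of_ne hik.symm]

lemma eval_eq_eval_substZero_add {k : σ} {F : MvPolynomial σ R} (hF : F.degreeOf k ≤ 1)
    (a : σ → R) :
    eval a F = eval a (substZero k F) + a k * eval a (pderiv k F) := by
  simpa using congrArg (eval a) (eq_substZero_add_X_mul_pderiv hF)

end AffineInVariable

section Concavity

variable {σ K : Type*} [Field K]

/-- The matrix `-F·H_F + s·(∇F)ᵀ(∇F)` at the point `a`. Over `ℝ`, for `s ≠ 1` and where
`F(a) > 0`, it is a multiple of the Hessian of `F ^ (1 - s)` at `a`. -/
noncomputable def concavityMatrix (s : K) (F : MvPolynomial σ K) (a : σ → K) : Matrix σ σ K :=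
  .of fun i j => -eval a F * eval a (pderiv i (pderiv j F)) +
    s * (eval a (pderiv i F) * eval a (pderiv j F))

/-- The matrix obtained from `concavityMatrix s F a` by eliminating the index `k`, written in terms
of `F₀ = F|_{x_k = 0}` and `F_k = ∂F/∂x_k`; the row vector `u` is `s·F_k·∇F₀ - F₀·∇F_k`. The
quotient `(2s - 1)/s` makes it meaningful only for `s ≠ 0`. -/
noncomputable def reducedMatrix [DecidableEq σ] (s : K) (k : σ) (F : MvPolynomial σ K)
    (a : σ → K) : Matrix {i // i ≠ k} {i // i ≠ k} K :=
  let F₀ := substZero k F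
  let Fₖ := pderiv k F
  let u : {i // i ≠ k} → K := fun i =>
    s * eval a Fₖ * eval a (pderiv i.1 F₀) - eval a F₀ * eval a (pderiv i.1 Fₖ)
  .of fun i j =>
    s * a k * eval a F₀ * eval a Fₖ * concavityMatrix ((2 * s - 1) / s) Fₖ a i j
      + s * eval a Fₖ ^ 2 * concavityMatrix s F₀ a i j - u i * u j

lemma isHermitian_concavityMatrix [StarRing K] [TrivialStar K] (s : K) (F : MvPolynomial σ K)
    (a : σ → K) : (concavityMatrix s F a).IsHermitian :=
  .ext fun i j => by
    simp only [concavityMatrix, Matrix.of_apply, star_trivial]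
    rw [pderiv_pderiv_comm, mul_comm (eval a (pderiv j F))]

lemma pivotSchurComplement_concavityMatrix [DecidableEq σ] {s : K} (hs : s ≠ 0) {k : σ}
    {F : MvPolynomial σ K} (hF : F.degreeOf k ≤ 1) {a : σ → K}
    (h0 : eval a (substZero k F) ≠ 0) (hk : eval a (pderiv k F) ≠ 0) :
    pivotSchurComplement (concavityMatrix s F a) k =
      (eval a F / (eval a (substZero k F) * (s * eval a (pderiv k F) ^ 2))) •
        reducedMatrix s k F a := by
  ext i j
  have hgrad (l : {l // l ≠ k}) := congrArg (eval a) (pderiv_eq_of_ne l.2 hF)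
  have hhess : eval a (pderiv i.1 (pderiv j.1 F)) =
      eval a (pderiv i.1 (pderiv j.1 (substZero k F))) +
        a k * eval a (pderiv i.1 (pderiv j.1 (pderiv k F))) := by
    simp [pderiv_eq_of_ne j.2 hF, pderiv_X_of_ne i.2.symm]
  simp only [map_add, map_mul, eval_X] at hgrad
  simp only [pivotSchurComplement, concavityMatrix, reducedMatrix, Matrix.of_apply,
    Matrix.smul_apply, smul_eq_mul, pderiv_pderiv_self_eq_zero hF, map_zero,
    pderiv_pderiv_comm k j.1 F, hgrad, hhess, eval_eq_eval_substZero_add hF]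
  field_simp
  ring

end Concavity

theorem posdef_iff_reduced_matrix_posdef_general {σ K : Type*} [Finite σ] [DecidableEq σ]
    [Field K] [LinearOrder K] [StarRing K] [TrivialStar K] [StarOrderedRing K]
    {F : MvPolynomial σ K} {k : σ} (hF : F.degreeOf k ≤ 1) {a : σ → K} (ha : 0 < eval a F)
    (h0 : 0 < eval a (substZero k F)) (hk : eval a (pderiv k F) ≠ 0) {s : K} (hs : 0 < s) :
    ((concavityMatrix s F a).PosSemidef ↔ (reducedMatrix s k F a).PosSemidef) ∧
      ((concavityMatrix s F a).PosDef ↔ (reducedMatrix s k F a).PosDef) := by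
  have hM := isHermitian_concavityMatrix s F a
  have hpivot : 0 < concavityMatrix s F a k k := by
    simpa [concavityMatrix, pderiv_pderiv_self_eq_zero hF] using mul_pos hs (mul_self_pos.2 hk)
  have hc : 0 < eval a F / (eval a (substZero k F) * (s * eval a (pderiv k F) ^ 2)) := by
    positivity
  rw [posSemidef_iff_posSemidef_pivotSchurComplement hM hpivot,
    posDef_iff_posDef_pivotSchurComplement hM hpivot,
    pivotSchurComplement_concavityMatrix hs.ne' hF h0.ne' hk]
  exact ⟨posSemidef_smul_iff hc, posDef_smul_iff hc⟩

/-- let `F` be a multi-affine homogeneous polynomial of degree `r ≥ 3` in `N`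
variables, `k` an index, `F₀ = F|_{x_k = 0}`, `F_k = ∂F/∂x_k`, and `a ∈ ℝ^N_{≥0}` with
`F₀(a) > 0` and `F_k(a) > 0`.  Then for every `s ≥ (r-1)/r` (resp. `s > (r-1)/r`) the `N × N`
matrix `(-F·H_F + s·(∇F)ᵀ(∇F))(a)` is positive semidefinite (resp. definite) iff the
`(N-1) × (N-1)` matrix (indexed by `i, j ≠ k`)
`s·x_k·F₀·F_k·(-F_k·H_{F_k} + ((2s-1)/s)·(∇F_k)ᵀ(∇F_k))
  + s·F_k²·(-F₀·H_{F₀} + s·(∇F₀)ᵀ(∇F₀))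
  - (s·F_k·∇F₀ - F₀·∇F_k)ᵀ(s·F_k·∇F₀ - F₀·∇F_k)` evaluated at `a` is. -/
theorem posdef_iff_reduced_matrix_posdef (N r : ℕ) (hr : 3 ≤ r)
    (F : MvPolynomial (Fin N) ℝ) (hhom : F.IsHomogeneous r)
    (haff : ∀ i, F.degreeOf i ≤ 1)
    (k : Fin N) (a : Fin N → ℝ) (ha : ∀ i, 0 ≤ a i)
    (F0 : MvPolynomial (Fin N) ℝ)
    (hF0 : F0 = aeval (fun i : Fin N => if i = k then 0 else X i) F)
    (Fk : MvPolynomial (Fin N) ℝ) (hFk : Fk = pderiv k F)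
    (h0 : 0 < eval a F0) (hk : 0 < eval a Fk) :
    (∀ s : ℝ, ((r : ℝ) - 1) / (r : ℝ) ≤ s →
      ((Matrix.of fun i j : Fin N =>
          -(eval a F) * eval a (pderiv i (pderiv j F))
            + s * (eval a (pderiv i F) * eval a (pderiv j F))).PosSemidef ↔
        (Matrix.of fun i j : {i : Fin N // i ≠ k} =>
          s * a k * eval a F0 * eval a Fk *
              (-(eval a Fk) * eval a (pderiv i.1 (pderiv j.1 Fk))
                + ((2 * s - 1) / s) * (eval a (pderiv i.1 Fk) * eval a (pderiv j.1 Fk)))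
            + s * (eval a Fk) ^ 2 *
              (-(eval a F0) * eval a (pderiv i.1 (pderiv j.1 F0))
                + s * (eval a (pderiv i.1 F0) * eval a (pderiv j.1 F0)))
            - (s * eval a Fk * eval a (pderiv i.1 F0) - eval a F0 * eval a (pderiv i.1 Fk))
              * (s * eval a Fk * eval a (pderiv j.1 F0)
                  - eval a F0 * eval a (pderiv j.1 Fk))).PosSemidef)) ∧
    (∀ s : ℝ, ((r : ℝ) - 1) / (r : ℝ) < s →
      ((Matrix.of fun i j : Fin N =>
          -(eval a F) * eval a (pderiv i (pderiv j F))
            + s * (eval a (pderiv i F) * eval a (pderiv j F))).PosDef ↔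
        (Matrix.of fun i j : {i : Fin N // i ≠ k} =>
          s * a k * eval a F0 * eval a Fk *
              (-(eval a Fk) * eval a (pderiv i.1 (pderiv j.1 Fk))
                + ((2 * s - 1) / s) * (eval a (pderiv i.1 Fk) * eval a (pderiv j.1 Fk)))
            + s * (eval a Fk) ^ 2 *
              (-(eval a F0) * eval a (pderiv i.1 (pderiv j.1 F0))
                + s * (eval a (pderiv i.1 F0) * eval a (pderiv j.1 F0)))
            - (s * eval a Fk * eval a (pderiv i.1 F0) - eval a F0 * eval a (pderiv i.1 Fk))
              * (s * eval a Fk * eval a (pderiv j.1 F0)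
                  - eval a F0 * eval a (pderiv j.1 Fk))).PosDef)) := by
  subst hF0 hFk
  have hF : 0 < eval a F := by
    rw [eval_eq_eval_substZero_add (haff k)]
    exact add_pos_of_pos_of_nonneg h0 (mul_nonneg (ha k) hk.le)
  have hr' : 0 < ((r : ℝ) - 1) / r :=
    div_pos (sub_pos.2 (Nat.one_lt_cast.2 (by lia))) (Nat.cast_pos.2 (by lia))
  have key {s : ℝ} := posdef_iff_reduced_matrix_posdef_general (haff k) hF h0 hk.ne' (s := s)
  exact ⟨fun s hs => (key (hr'.trans_le hs)).1, fun s hs => (key (hr'.trans hs)).2⟩
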